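/- Let Z₁ ~ N(0,1), μ* ∈ ℝⁿ with ‖μ*‖ = 1, and φ : ℝ → ℝ be C² with polynomial growth together with its derivatives. Let A = E[(φ'(⟨Z, μ*⟩))² Z Zᵀ], where Z ~ N(0, Iₙ). Then the minimum eigenvalue of A equals min{ E[(φ'(Z₁))²], E[(Z₁ φ'(Z₁))²] }. -/

import Mathlib

open MeasureTheory

/-- The standard Gaussian measure `N(0, Iₙ)` on `ℝⁿ`. -/
noncomputable def stdGaussian (n : ℕ) : Measure (Fin n → ℝ) :=
  Measure.pi fun _ => ProbabilityTheory.gaussianReal 0 1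

open ProbabilityTheory in
lemma aux_gauss (n : ℕ) : HasGaussianLaw (fun z : Fin n → ℝ => fun i => z i) (_root_.stdGaussian n) := by
  unfold _root_.stdGaussian
  refine iIndepFun.hasGaussianLaw (X := fun i (z : Fin n → ℝ) => z i) (fun i => ?_)
    (iIndepFun_pi (X := fun _ => id) (fun _ => aemeasurable_id))
  exact HasLaw.hasGaussianLaw (μ := gaussianReal 0 1)
    ⟨(measurable_pi_apply i).aemeasurable, (measurePreserving_eval (fun _ : Fin n => gaussianReal 0 1) i).map_eq⟩

instance aux_prob (n : ℕ) : IsProbabilityMeasure (_root_.stdGaussian n) := by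
  unfold _root_.stdGaussian; infer_instance

/-- linear form -/
def ell {n : ℕ} (a z : Fin n → ℝ) : ℝ := ∑ i, z i * a i

lemma aux_map (n : ℕ) (i : Fin n) :
    (_root_.stdGaussian n).map (fun z => z i) = ProbabilityTheory.gaussianReal 0 1 :=
  (measurePreserving_eval (fun _ : Fin n => ProbabilityTheory.gaussianReal 0 1) i).map_eq

open ProbabilityTheory in
lemma aux_coord_memLp (n : ℕ) (i : Fin n) : MemLp (fun z => z i) 2 (_root_.stdGaussian n) :=
  ((aux_gauss n).eval i).memLp_two

open ProbabilityTheory in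
lemma aux_coord_int (n : ℕ) (i : Fin n) : ∫ z, z i ∂(_root_.stdGaussian n) = 0 := by
  have h := integral_map (μ := _root_.stdGaussian n) (φ := fun z => z i) (measurable_pi_apply i).aemeasurable
    (f := fun x : ℝ => x) (by fun_prop)
  rw [← h, aux_map, integral_id_gaussianReal]

open ProbabilityTheory in
lemma aux_coord_cov (n : ℕ) (i j : Fin n) :
    ∫ z, z i * z j ∂(_root_.stdGaussian n) = if i = j then 1 else 0 := by
  split_ifs with hij
  · subst hij
    have h := integral_map (μ := _root_.stdGaussian n) (φ := fun z => z i) (measurable_pi_apply i).aemeasurable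
      (f := fun x : ℝ => x * x) (by fun_prop)
    rw [← h, aux_map]
    have h2 := variance_id_gaussianReal (μ := 0) (v := 1)
    rw [variance_eq_sub (memLp_id_gaussianReal' 2 (by simp))] at h2
    simpa [pow_two] using h2
  · have hI : iIndepFun (fun i (z : Fin n → ℝ) => z i) (_root_.stdGaussian n) :=
      iIndepFun_pi (X := fun _ => id) (fun _ => aemeasurable_id)
    have := (hI.indepFun hij).integral_fun_mul_eq_mul_integral
      (aux_coord_memLp n i).aestronglyMeasurable (aux_coord_memLp n j).aestronglyMeasurable
    rw [this, aux_coord_int]; simp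

lemma ell_int {n : ℕ} (a : Fin n → ℝ) : ∫ z, ell a z ∂(_root_.stdGaussian n) = 0 := by
  unfold ell
  rw [integral_finsetSum]
  · simp [integral_mul_const, aux_coord_int]
  · intro i _
    exact ((aux_coord_memLp n i).integrable (by norm_num)).mul_const _

lemma ell_cov {n : ℕ} (a b : Fin n → ℝ) :
    ∫ z, ell a z * ell b z ∂(_root_.stdGaussian n) = ∑ i, a i * b i := by
  have h : ∀ i j, Integrable (fun z : Fin n → ℝ => z i * z j) (_root_.stdGaussian n) := fun i j =>
    (aux_coord_memLp n i).integrable_mul (aux_coord_memLp n j)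
  have e : ∀ z : Fin n → ℝ, ell a z * ell b z = ∑ i, ∑ j, z i * z j * (a i * b j) := by
    intro z
    unfold ell
    rw [Finset.sum_mul_sum]
    exact Finset.sum_congr rfl fun i _ => Finset.sum_congr rfl fun j _ => by ring
  simp_rw [e]
  rw [integral_finsetSum]
  · refine Finset.sum_congr rfl fun i _ => ?_
    rw [integral_finsetSum]
    · simp [integral_mul_const, aux_coord_cov]
    · exact fun j _ => (h i j).mul_const _
  · exact fun i _ => integrable_finsetSum _ fun j _ => (h i j).mul_const _

/-- ell as a continuous linear map -/
noncomputable def ellL {n : ℕ} (a : Fin n → ℝ) : (Fin n → ℝ) →L[ℝ] ℝ :=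
  ∑ i, a i • ContinuousLinearMap.proj (R := ℝ) (φ := fun _ : Fin n => ℝ) i

lemma ellL_apply {n : ℕ} (a z : Fin n → ℝ) : ellL a z = ell a z := by
  simp [ellL, ell, mul_comm]

open ProbabilityTheory in
lemma ell_gauss {n : ℕ} (a : Fin n → ℝ) : HasGaussianLaw (ell a) (_root_.stdGaussian n) := by
  have := (aux_gauss n).map_fun (ellL a)
  simpa only [ellL_apply] using this

open ProbabilityTheory in
lemma ell_map {n : ℕ} (a : Fin n → ℝ) (ha : ∑ i, a i ^ 2 = 1) :
    (_root_.stdGaussian n).map (ell a) = gaussianReal 0 1 := by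
  rw [(ell_gauss a).map_eq_gaussianReal, variance_eq_sub (ell_gauss a).memLp_two, ell_int]
  have : ∫ z, (ell a ^ 2) z ∂(_root_.stdGaussian n) = 1 := by
    simpa [pow_two] using (ell_cov a a).trans (by simpa [pow_two] using ha)
  rw [this]; simp

open ProbabilityTheory in
lemma ell_indep {n : ℕ} {ι : Type*} [Fintype ι] (a : Fin n → ℝ) (b : ι → Fin n → ℝ)
    (h : ∀ k, ∑ i, a i * b k i = 0) :
    IndepFun (ell a) (fun z k => ell (b k) z) (_root_.stdGaussian n) := by
  have h1 : IndepFun (fun z (_ : Unit) => ell a z) (fun z k => ell (b k) z)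
      (_root_.stdGaussian n) := by
    apply HasGaussianLaw.indepFun_of_covariance_eval (X := fun _ : Unit => ell a)
      (Y := fun k => ell (b k))
    · have := (aux_gauss n).map_fun
        ((ContinuousLinearMap.pi (fun _ : Unit => ellL a)).prod
          (ContinuousLinearMap.pi (fun k => ellL (b k))))
      exact this.congr (Filter.Eventually.of_forall fun z =>
        Prod.ext (funext fun _ => ellL_apply a z) (funext fun k => ellL_apply (b k) z))
    · intro _ k
      rw [covariance_eq_sub (ell_gauss a).memLp_two (ell_gauss (b k)).memLp_two, ell_int]
      simpa using (ell_cov a (b k)).trans (h k)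
  exact h1.comp (φ := fun f : Unit → ℝ => f ()) (ψ := id) (by fun_prop) measurable_id

open ProbabilityTheory in
lemma aux_integrable (g : ℝ → ℝ) (hg : Continuous g) (C : ℝ) (p m : ℕ)
    (hb : ∀ x, |g x| ≤ C * (1 + |x|) ^ p) :
    Integrable (fun x => g x ^ 2 * x ^ m) (gaussianReal 0 1) := by
  have hC : 0 ≤ C := by simpa using (abs_nonneg _).trans (hb 0)
  have hN : ∀ N : ℕ, Integrable (fun x : ℝ => (1 + |x|) ^ N) (gaussianReal 0 1) := by
    intro N
    have k0 : MemLp (id : ℝ → ℝ) (N : ENNReal) (gaussianReal 0 1) :=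
      memLp_id_gaussianReal' (N : ENNReal) (ENNReal.natCast_ne_top N)
    have k1 : MemLp (fun x : ℝ => |x|) (N : ENNReal) (gaussianReal 0 1) := k0.norm
    have k2 : MemLp (fun _ : ℝ => (1 : ℝ)) (N : ENNReal) (gaussianReal 0 1) := memLp_const 1
    have : MemLp (fun x : ℝ => 1 + |x|) (N : ENNReal) (gaussianReal 0 1) := k2.add k1
    have := this.integrable_norm_pow'
    refine this.congr (Filter.Eventually.of_forall fun x => ?_)
    simp only [Real.norm_eq_abs]
    rw [abs_of_nonneg (by positivity)]
  refine ((hN (2 * p + m)).const_mul (C ^ 2)).mono' (by fun_prop)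
    (Filter.Eventually.of_forall fun x => ?_)
  rw [Real.norm_eq_abs, abs_mul, abs_pow, abs_pow]
  calc |g x| ^ 2 * |x| ^ m ≤ (C * (1 + |x|) ^ p) ^ 2 * (1 + |x|) ^ m := by
        gcongr
        · exact hb x
        · linarith
    _ = _ := by rw [pow_add, mul_comm 2 p, pow_mul]; ring

open ProbabilityTheory in
lemma aux_entry {n : ℕ} (μ : Fin n → ℝ) (hμ : ∑ i, μ i ^ 2 = 1)
    (g : ℝ → ℝ) (hg : Continuous g) (C : ℝ) (p : ℕ)
    (hb : ∀ x, |g x| ≤ C * (1 + |x|) ^ p) (k l : Fin n) :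
    ∫ z, g (∑ i, z i * μ i) ^ 2 * z k * z l ∂(_root_.stdGaussian n) =
      (∫ t, (t * g t) ^ 2 ∂gaussianReal 0 1) * (μ k * μ l) +
      (∫ t, g t ^ 2 ∂gaussianReal 0 1) * ((if k = l then 1 else 0) - μ k * μ l) := by
  let b : Fin n → Fin n → ℝ := fun k i => (if i = k then 1 else 0) - μ k * μ i
  have hbdef : ∀ k i, b k i = (if i = k then 1 else 0) - μ k * μ i := fun _ _ => rfl
  have hμ' : ∑ i, μ i * μ i = 1 := by simpa [pow_two] using hμ
  have horth : ∀ k, ∑ i, μ i * b k i = 0 := by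
    intro k
    have : ∀ i, μ i * b k i = (if i = k then μ i else 0) - μ k * (μ i * μ i) := by
      intro i; rw [hbdef]; split_ifs <;> ring
    simp_rw [this]
    rw [Finset.sum_sub_distrib, ← Finset.mul_sum, hμ']; simp
  have hbb : ∀ k l, ∑ i, b k i * b l i = (if k = l then 1 else 0) - μ k * μ l := by
    intro k l
    have : ∀ i, b k i * b l i = (if i = k then b l i else 0) - μ k * (μ i * b l i) := by
      intro i; rw [hbdef k]; split_ifs <;> ring
    simp_rw [this]
    rw [Finset.sum_sub_distrib, ← Finset.mul_sum, horth]
    simp [hbdef, mul_comm]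
  have hz : ∀ (z : Fin n → ℝ) k, z k = μ k * ell μ z + ell (b k) z := by
    intro z k
    have : ell (b k) z = z k - μ k * ell μ z := by
      unfold ell
      have : ∀ i, z i * b k i = (if i = k then z i else 0) - μ k * (z i * μ i) := by
        intro i; rw [hbdef]; split_ifs <;> ring
      simp_rw [this]
      rw [Finset.sum_sub_distrib, ← Finset.mul_sum]; simp
    rw [this]; ring
  have hI := ell_indep μ b horth
  have hellc : ∀ a : Fin n → ℝ, Measurable (ell a) := by
    intro a; unfold ell; fun_prop
  have hgm : Measurable g := hg.measurable
  have hXint : ∀ m : ℕ, Integrable (fun z => g (ell μ z) ^ 2 * ell μ z ^ m)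
      (_root_.stdGaussian n) := by
    intro m
    have := aux_integrable g hg C p m hb
    rw [← ell_map μ hμ] at this
    exact this.comp_measurable (hellc μ)
  have hXval : ∀ m : ℕ, ∫ z, g (ell μ z) ^ 2 * ell μ z ^ m ∂(_root_.stdGaussian n) =
      ∫ t, g t ^ 2 * t ^ m ∂gaussianReal 0 1 := by
    intro m
    rw [← ell_map μ hμ, integral_map (hellc μ).aemeasurable
      (Continuous.aestronglyMeasurable (by fun_prop))]
  have hYint : ∀ k, Integrable (ell (b k)) (_root_.stdGaussian n) := fun k => (ell_gauss _).integrable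
  have hYYint : ∀ k l, Integrable (fun z => ell (b k) z * ell (b l) z) (_root_.stdGaussian n) :=
    fun k l => (ell_gauss _).memLp_two.integrable_mul (ell_gauss _).memLp_two
  have hI1 : ∀ k, IndepFun (fun z => g (ell μ z) ^ 2 * ell μ z ^ 1) (ell (b k))
      (_root_.stdGaussian n) := fun k =>
    hI.comp (φ := fun t => g t ^ 2 * t ^ 1) (ψ := fun y : Fin n → ℝ => y k) (by fun_prop)
      (measurable_pi_apply k)
  have hI2 : IndepFun (fun z => g (ell μ z) ^ 2 * ell μ z ^ 0)
      (fun z => ell (b k) z * ell (b l) z) (_root_.stdGaussian n) :=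
    hI.comp (φ := fun t => g t ^ 2 * t ^ 0) (ψ := fun y : Fin n → ℝ => y k * y l) (by fun_prop)
      ((measurable_pi_apply k).mul (measurable_pi_apply l))
  have hv1 : ∀ k, ∫ z, (g (ell μ z) ^ 2 * ell μ z ^ 1) * ell (b k) z ∂(_root_.stdGaussian n) = 0 := by
    intro k
    rw [(hI1 k).integral_fun_mul_eq_mul_integral (hXint 1).aestronglyMeasurable
      (hYint k).aestronglyMeasurable, ell_int, mul_zero]
  have hv2 : ∫ z, (g (ell μ z) ^ 2 * ell μ z ^ 0) * (ell (b k) z * ell (b l) z)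
      ∂(_root_.stdGaussian n) =
      (∫ t, g t ^ 2 ∂gaussianReal 0 1) * ((if k = l then 1 else 0) - μ k * μ l) := by
    rw [hI2.integral_fun_mul_eq_mul_integral (hXint 0).aestronglyMeasurable
      (hYYint k l).aestronglyMeasurable, ell_cov, hbb, hXval]
    simp
  have hi1 : ∀ k, Integrable (fun z => (g (ell μ z) ^ 2 * ell μ z ^ 1) * ell (b k) z)
      (_root_.stdGaussian n) := fun k => (hI1 k).integrable_mul (hXint 1) (hYint k)
  have hi2 : Integrable (fun z => (g (ell μ z) ^ 2 * ell μ z ^ 0) * (ell (b k) z * ell (b l) z))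
      (_root_.stdGaussian n) := hI2.integrable_mul (hXint 0) (hYYint k l)
  have e : ∀ z : Fin n → ℝ, g (∑ i, z i * μ i) ^ 2 * z k * z l =
      (μ k * μ l) * (g (ell μ z) ^ 2 * ell μ z ^ 2)
      + μ k * ((g (ell μ z) ^ 2 * ell μ z ^ 1) * ell (b l) z)
      + μ l * ((g (ell μ z) ^ 2 * ell μ z ^ 1) * ell (b k) z)
      + (g (ell μ z) ^ 2 * ell μ z ^ 0) * (ell (b k) z * ell (b l) z) := by
    intro z
    change g (ell μ z) ^ 2 * z k * z l = _
    rw [hz z k, hz z l]; ring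
  simp_rw [e]
  have A1 := (hXint 2).const_mul (μ k * μ l)
  have A2 := (hi1 l).const_mul (μ k)
  have A3 := (hi1 k).const_mul (μ l)
  have A12 := A1.fun_add A2
  have A123 := A12.fun_add A3
  rw [integral_add A123 hi2, integral_add A12 A3, integral_add A1 A2,
    integral_const_mul, integral_const_mul, integral_const_mul, hv1, hv1, hv2, hXval]
  have : ∀ t, (t * g t) ^ 2 = g t ^ 2 * t ^ 2 := fun t => by ring
  simp_rw [this]
  ring

lemma aux_mulVec {n : ℕ} (μ : Fin n → ℝ) (α β : ℝ) (A : Matrix (Fin n) (Fin n) ℝ)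
    (hA : ∀ k l, A k l = β * (μ k * μ l) + α * ((if k = l then 1 else 0) - μ k * μ l))
    (v : Fin n → ℝ) :
    A.mulVec v = α • v + ((β - α) * ∑ i, μ i * v i) • μ := by
  ext k
  simp only [Matrix.mulVec, dotProduct, Pi.add_apply, Pi.smul_apply, smul_eq_mul]
  have : ∀ l, A k l * v l = (if k = l then α * v l else 0) + (β - α) * μ k * (μ l * v l) := by
    intro l; rw [hA]; split_ifs <;> ring
  simp_rw [this]
  rw [Finset.sum_add_distrib, ← Finset.mul_sum]
  simp; ring

lemma aux_eig {n : ℕ} (A : Matrix (Fin n) (Fin n) ℝ) (hA : A.IsHermitian) (v : Fin n → ℝ)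
    (hv : v ≠ 0) (c : ℝ) (h : A.mulVec v = c • v) : ∃ i, hA.eigenvalues i = c := by
  have h1 : Module.End.HasEigenvalue (Matrix.toLin' A) c :=
    Module.End.hasEigenvalue_of_hasEigenvector (x := v)
      ⟨Module.End.mem_eigenspace_iff.2 (by simpa using h), hv⟩
  have h2 := h1.mem_spectrum
  rw [Matrix.spectrum_toLin', hA.spectrum_real_eq_range_eigenvalues] at h2
  exact h2

lemma aux_orth {n : ℕ} (hn : 2 ≤ n) (μ : Fin n → ℝ) :
    ∃ w : Fin n → ℝ, w ≠ 0 ∧ ∑ i, μ i * w i = 0 := by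
  let i0 : Fin n := ⟨0, by omega⟩
  let i1 : Fin n := ⟨1, by omega⟩
  have hne : i0 ≠ i1 := by simp [i0, i1]
  by_cases h0 : μ i0 = 0
  · exact ⟨Pi.single i0 1, by simp, by simp [Pi.single_apply, h0]⟩
  · refine ⟨Pi.single i1 (μ i0) - Pi.single i0 (μ i1), fun h => h0 ?_, ?_⟩
    · have := congrFun h i1
      simpa [Pi.single_apply, hne.symm] using this
    · simp [Pi.single_apply, mul_sub, Finset.sum_sub_distrib]; ring

lemma aux_final {n : ℕ} (hn : 2 ≤ n) (μ : Fin n → ℝ) (hμ : ∑ i, μ i ^ 2 = 1) (α β : ℝ)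
    (A : Matrix (Fin n) (Fin n) ℝ)
    (hA : ∀ k l, A k l = β * (μ k * μ l) + α * ((if k = l then 1 else 0) - μ k * μ l))
    (hH : A.IsHermitian) : (⨅ i : Fin n, hH.eigenvalues i) = min α β := by
  haveI : Nonempty (Fin n) := ⟨⟨0, by omega⟩⟩
  have hmv := aux_mulVec μ α β A hA
  have hbdd : BddBelow (Set.range hH.eigenvalues) := (Set.finite_range _).bddBelow
  apply le_antisymm
  · apply le_min
    · obtain ⟨w, hw, ho⟩ := aux_orth hn μ
      obtain ⟨i, hi⟩ := aux_eig A hH w hw α (by rw [hmv, ho]; simp)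
      exact hi ▸ ciInf_le hbdd i
    · have hμ0 : μ ≠ 0 := by rintro rfl; simp at hμ
      obtain ⟨i, hi⟩ := aux_eig A hH μ hμ0 β (by
        have : ∑ i, μ i * μ i = 1 := by simpa [pow_two] using hμ
        rw [hmv, this, ← add_smul]; congr 1; ring)
      exact hi ▸ ciInf_le hbdd i
  · refine le_ciInf fun i => ?_
    have h1 := hH.mulVec_eigenvectorBasis i
    set v : Fin n → ℝ := ⇑(hH.eigenvectorBasis i) with hv
    set c := hH.eigenvalues i
    have hv0 : v ≠ 0 := by
      intro h0
      apply hH.eigenvectorBasis.toBasis.ne_zero i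
      ext j
      simpa using congrFun h0 j
    rw [hmv] at h1
    by_cases hs : ∑ j, μ j * v j = 0
    · rw [hs] at h1
      obtain ⟨j, hj⟩ := Function.ne_iff.1 hv0
      have := congrFun h1 j
      simp only [mul_zero, zero_smul, add_zero, Pi.smul_apply, smul_eq_mul] at this
      exact (min_le_left _ _).trans (mul_right_cancel₀ hj this).le
    · have h2 : ∑ j, μ j * (α • v + ((β - α) * ∑ i, μ i * v i) • μ) j = ∑ j, μ j * (c • v) j := by
        rw [h1]
      set s := ∑ j, μ j * v j with hsdef
      have e1 : ∑ j, μ j * (α • v + ((β - α) * s) • μ) j = α * s + (β - α) * s * ∑ j, μ j ^ 2 := by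
        have hgen : ∀ d : ℝ, ∑ j, μ j * (α • v + d • μ) j
            = α * ∑ j, μ j * v j + d * ∑ j, μ j ^ 2 := by
          intro d
          rw [Finset.mul_sum, Finset.mul_sum, ← Finset.sum_add_distrib]
          refine Finset.sum_congr rfl fun j _ => ?_
          simp; ring
        exact hgen _
      have e2 : ∑ j, μ j * (c • v) j = c * s := by
        rw [hsdef, Finset.mul_sum]
        refine Finset.sum_congr rfl fun j _ => ?_
        simp; ring
      rw [e1, e2, hμ] at h2
      have : β = c := mul_right_cancel₀ hs (by linarith)
      exact (min_le_right _ _).trans this.le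

/-- For a unit vector `μ*` and `φ ∈ C²` of polynomial growth, the minimum eigenvalue of
`A = E[(φ'(⟨Z, μ*⟩))² Z Zᵀ]` (with `Z ~ N(0, Iₙ)`) equals
`min{E[(φ'(Z₁))²], E[(Z₁ φ'(Z₁))²]}` where `Z₁ ~ N(0,1)`. -/
theorem stmt_8 (n : ℕ) (hn : 2 ≤ n) (μstar : Fin n → ℝ)
    (hμ : ∑ i, μstar i ^ 2 = 1)
    (φ : ℝ → ℝ) (hφ : ContDiff ℝ 2 φ)
    (C : ℝ) (p : ℕ)
    (hgrowth : ∀ x : ℝ,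
      |φ x| + |deriv φ x| + |deriv (deriv φ) x| ≤ C * (1 + |x|) ^ p)
    (A : Matrix (Fin n) (Fin n) ℝ)
    (hA : A = Matrix.of fun k l =>
        ∫ z, (deriv φ (∑ i, z i * μstar i)) ^ 2 * z k * z l ∂stdGaussian n)
    (hHerm : A.IsHermitian) :
    haveI : Nonempty (Fin n) := ⟨⟨0, by omega⟩⟩
    (⨅ i : Fin n, hHerm.eigenvalues i)
      = min (∫ t, (deriv φ t) ^ 2 ∂ProbabilityTheory.gaussianReal 0 1)
          (∫ t, (t * deriv φ t) ^ 2 ∂ProbabilityTheory.gaussianReal 0 1) := by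
  refine aux_final hn μstar hμ _ _ A (fun k l => ?_) hHerm
  rw [hA]
  refine aux_entry μstar hμ (deriv φ) (hφ.continuous_deriv (by norm_num)) C p (fun x => ?_) k l
  have := hgrowth x
  have h1 := abs_nonneg (φ x)
  have h2 := abs_nonneg (deriv (deriv φ) x)
  linarith
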